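/- arXiv:2303.00892 — 3 statements merged into one kernel-verified Lean document; each statement's English description precedes it below -/
import Mathlib

section
/- If a choice rule C on a finite set 𝒳 of contracts satisfies path independence, then there exists a utility function u : 2^𝒳 → ℝ that rationalizes C and satisfies ordinal concavity+ (a property stronger than ordinal concavity). -/
/-!
A path independent choice rule is a union of maximizers of finitely many rankings (in the manner of
Aizerman and Malishevski): there are `r i : α → ℕ`, injective on the alternatives of positive rank
(rank `0` means worse than the outside option), such that the `r i`-best element of every menu `Y`
lies in `C Y`, and every `x ∈ C X` is `r i`-best in `X` for some `i`. Such rankings arise by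
repeatedly removing a chosen element from the set of all contracts (`exists_ranking_aux`).

The utility compares sets `X` lexicographically by the vector of best ranks
`i ↦ max_{x ∈ X} r i x`, and breaks ties in favour of smaller sets (`lexValue`).

* Rationalization: enlarging a menu weakly raises all best ranks, `C X` attains the best ranks
  of `X`, and a subset of `X` attaining all of them contains `C X`.
* Ordinal concavity+: let `x ∈ X \ X'`. If `x` beats the best of `X'` in some ranking, adding `x`
  improves `X'`. If `x` is best in `X` for no ranking, deleting it improves `X`. Otherwise take the
  first ranking `i` in which `x` is best in `X`, and let `x'` be the `r i`-best element of `X'`.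
  Then `x'` is strictly better than `x`, so exchanging `x` for `x'` raises the `i`-th best rank,
  while all earlier best ranks, not being due to `x`, do not fall.
-/

open Finset

variable {α : Type*} [DecidableEq α] [Fintype α]

/-- `X − x + x'`, where `x'` may be `∅` (encoded as `none`). -/
def swapIn (X : Finset α) (x : α) (x' : Option α) : Finset α :=
  x'.elim (X.erase x) (fun a => insert a (X.erase x))

/-- `X' + x − x'`, where `x'` may be `∅` (encoded as `none`). -/
def swapOut (X' : Finset α) (x : α) (x' : Option α) : Finset α :=
  x'.elim (insert x X') (fun a => (insert x X').erase a)

/-- A choice rule selects a subset of every available set. -/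
def IsChoiceRule (C : Finset α → Finset α) : Prop :=
  ∀ X : Finset α, C X ⊆ X

def PathIndependent (C : Finset α → Finset α) : Prop :=
  ∀ X X' : Finset α, C (X ∪ X') = C (C X ∪ X')

def LawOfAggregateDemand (C : Finset α → Finset α) : Prop :=
  ∀ X X' : Finset α, X' ⊆ X → (C X').card ≤ (C X).card

def Rationalizes (u : Finset α → ℝ) (C : Finset α → Finset α) : Prop :=
  ∀ X X' : Finset α, X' ⊆ X → X' ≠ C X → u X' < u (C X)

def OrdinalConcave (u : Finset α → ℝ) : Prop :=
  ∀ X X' : Finset α, ∀ x ∈ X \ X', ∃ x' : Option α,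
    (∀ a : α, x' = some a → a ∈ X' \ X) ∧
    (u X < u (swapIn X x x') ∨ u X' < u (swapOut X' x x') ∨
      (u X = u (swapIn X x x') ∧ u X' = u (swapOut X' x x')))

def OrdinalConcavePlus (u : Finset α → ℝ) : Prop :=
  ∀ X X' : Finset α, ∀ x ∈ X \ X',
    (∃ x' : Option α, (∀ a : α, x' = some a → a ∈ X' \ X) ∧ u X < u (swapIn X x x')) ∨
    u X' < u (insert x X')

def SizeRestrictedConcave (u : Finset α → ℝ) : Prop :=
  ∀ X X' : Finset α, X'.card < X.card → ∃ x ∈ X \ X',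
    (u X < u (X.erase x) ∨ u X' < u (insert x X') ∨
      (u X = u (X.erase x) ∧ u X' = u (insert x X')))

def MNatConcave (u : Finset α → ℝ) : Prop :=
  ∀ X X' : Finset α, ∀ x ∈ X \ X', ∃ x' : Option α,
    (∀ a : α, x' = some a → a ∈ X' \ X) ∧
    u X + u X' ≤ u (swapIn X x x') + u (swapOut X' x x')

def Substitutes (C : Finset α → Finset α) : Prop :=
  ∀ X X' : Finset α, X ⊆ X' → C X' ∩ X ⊆ C X

def IrrelevanceOfRejectedContracts (C : Finset α → Finset α) : Prop :=
  ∀ X X' : Finset α, X ⊆ X' → C X' ⊆ X → C X = C X'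

theorem PathIndependent.substitutes {C : Finset α → Finset α} (hC : IsChoiceRule C)
    (hpi : PathIndependent C) : Substitutes C := by
  intro X X' hXX' a ha
  rw [Finset.mem_inter] at ha
  have h := hpi X (X' \ X)
  rw [Finset.union_sdiff_of_subset hXX'] at h
  have h2 : a ∈ C X ∪ X' \ X := hC _ (h ▸ ha.1)
  simp only [Finset.mem_union, Finset.mem_sdiff] at h2
  tauto

theorem PathIndependent.irc {C : Finset α → Finset α}
    (hpi : PathIndependent C) : IrrelevanceOfRejectedContracts C := by
  intro X X' hXX' h
  have h1 := hpi X' X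
  rw [Finset.union_eq_left.2 hXX', Finset.union_eq_right.2 h] at h1
  exact h1.symm

/-- `x` has positive rank, and no element of `X` is ranked above it. -/
def IsTopRanked (r : α → ℕ) (X : Finset α) (x : α) : Prop :=
  0 < r x ∧ ∀ z ∈ X, r z ≤ r x

/-- The ranking is built by peeling chosen elements outside `X` off `K`; once none is left,
`C K = C X`, and `x` can be ranked next. -/
theorem exists_ranking_aux {C : Finset α → Finset α} (hC : IsChoiceRule C)
    (hsub : Substitutes C) (hirc : IrrelevanceOfRejectedContracts C) {X : Finset α} {x : α} (hx : x ∈ C X)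
    (K : Finset α) (hK : X ⊆ K) :
    ∃ r : α → ℕ, (∀ a b, 0 < r a → r a = r b → a = b) ∧
      (∀ Y ⊆ K, ∀ y ∈ Y, IsTopRanked r Y y → y ∈ C Y) ∧ IsTopRanked r X x := by
  induction hn : K.card using Nat.strong_induction_on generalizing K with
  | _ n ih =>
  by_cases h : C K ⊆ X
  · have hKX := hirc X K hK h
    refine ⟨fun a => if a = x then 1 else 0, ?_, ?_, ?_⟩
    · intro a b; grind
    · rintro Y hY y hy ⟨h0, -⟩
      have : y = x := by grind
      subst this
      exact hsub Y K hY (Finset.mem_inter.2 ⟨hKX ▸ hx, hy⟩)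
    · refine ⟨by simp, ?_⟩
      intro z _; grind
  · obtain ⟨y, hyK, hyX⟩ := Finset.not_subset.1 h
    have hyK' : y ∈ K := hC _ hyK
    obtain ⟨r, hinj, hcomp, htop⟩ := ih _ (by
      rw [← hn]; exact Finset.card_erase_lt_of_mem hyK') (K.erase y)
      (fun a ha => Finset.mem_erase.2 ⟨fun e => hyX (e ▸ ha), hK ha⟩) rfl
    have hlt : ∀ a, r a < Finset.univ.sup r + 1 := fun a =>
      Nat.lt_succ_of_le (Finset.le_sup (Finset.mem_univ a))
    refine ⟨fun a => if a = y then Finset.univ.sup r + 1 else r a, ?_, ?_, ?_⟩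
    · intro a b
      have := hlt a
      have := hlt b
      have := hinj a b
      grind
    · rintro Y hY z hz ⟨h0, h1⟩
      by_cases hyY : y ∈ Y
      · have h2 := h1 y hyY
        have h3 := hlt z
        have : z = y := by grind
        subst this
        exact hsub Y K hY (Finset.mem_inter.2 ⟨hyK, hz⟩)
      · have hzy : z ≠ y := fun e => hyY (e ▸ hz)
        refine hcomp Y (fun a ha => Finset.mem_erase.2 ⟨fun e => hyY (e ▸ ha), hY ha⟩) z hz ⟨?_, ?_⟩
        · simpa [hzy] using h0
        · intro w hw
          have := h1 w hw
          have hwy : w ≠ y := fun e => hyY (e ▸ hw)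
          simpa [hzy, hwy] using this
    · have hxy : x ≠ y := fun e => hyX (e ▸ hC X hx)
      refine ⟨by simpa [hxy] using htop.1, fun z hz => ?_⟩
      have hzy : z ≠ y := fun e => hyX (e ▸ hz)
      simpa [hxy, hzy] using htop.2 z hz

/-- The finite family of rankings, indexed by `Fin n` so that it can be compared
lexicographically. -/
theorem exists_rankings {C : Finset α → Finset α} (hC : IsChoiceRule C)
    (hpi : PathIndependent C) :
    ∃ (n : ℕ) (r : Fin n → α → ℕ), (∀ i a b, 0 < r i a → r i a = r i b → a = b) ∧
      (∀ i Y, ∀ y ∈ Y, IsTopRanked (r i) Y y → y ∈ C Y) ∧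
      (∀ X, ∀ x ∈ C X, ∃ i, IsTopRanked (r i) X x) := by
  have key := fun p : {p : Finset α × α // p.2 ∈ C p.1} =>
    exists_ranking_aux hC (hpi.substitutes hC) hpi.irc p.2 Finset.univ (Finset.subset_univ _)
  choose r hinj hcomp htop using key
  let e := Fintype.equivFin {p : Finset α × α // p.2 ∈ C p.1}
  refine ⟨_, fun i => r (e.symm i), fun i => hinj _,
    fun i Y => hcomp _ Y (Finset.subset_univ _), fun X x hx => ⟨e ⟨(X, x), hx⟩, ?_⟩⟩
  simpa using htop ⟨(X, x), hx⟩

theorem sup_le_sup_erase {r : α → ℕ} {X : Finset α} {x : α} (h : ¬ IsTopRanked r X x) :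
    X.sup r ≤ (X.erase x).sup r := by
  refine Finset.sup_le fun z hz => ?_
  by_cases hzx : z = x
  · subst hzx
    by_cases h0 : 0 < r z
    · have : ∃ w ∈ X, r z < r w := by
        by_contra! hcon
        exact h ⟨h0, hcon⟩
      obtain ⟨w, hw, hlt⟩ := this
      exact hlt.le.trans (Finset.le_sup (Finset.mem_erase.2 ⟨by rintro rfl; simp at hlt, hw⟩))
    · omega
  · exact Finset.le_sup (Finset.mem_erase.2 ⟨hzx, hz⟩)

theorem toLex_lt_of_le_of_lt {n : ℕ} {a b : Fin n → ℕ} (i : Fin n)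
    (hle : ∀ j < i, a j ≤ b j) (hlt : a i < b i) : toLex a < toLex b := by
  by_contra hcon
  rcases (not_lt.1 hcon).eq_or_lt with h | ⟨k, hk, hk'⟩
  · have : b = a := toLex.injective h
    simp [this] at hlt
  · simp only [Pi.toLex_apply] at hk hk'
    rcases lt_trichotomy k i with h | h | h
    · exact absurd (hle k h) (not_le.2 hk')
    · subst h; exact absurd hlt (not_lt.2 hk'.le)
    · exact absurd (hk i h) hlt.ne'

/-- The vector of best ranks of `X`, followed by `-|X|`, in lexicographic order. -/
def lexValue {n : ℕ} (r : Fin n → α → ℕ) (X : Finset α) : Lex (Fin n → ℕ) ×ₗ ℤ :=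
  toLex (toLex (fun i => X.sup (r i)), -(X.card : ℤ))

theorem lexValue_lt_of_lt {n : ℕ} {r : Fin n → α → ℕ} {X Y : Finset α} (i : Fin n)
    (hle : ∀ j < i, X.sup (r j) ≤ Y.sup (r j)) (hlt : X.sup (r i) < Y.sup (r i)) :
    lexValue r X < lexValue r Y :=
  Prod.Lex.toLex_lt_toLex.2 (Or.inl (toLex_lt_of_le_of_lt i hle hlt))

theorem lexValue_lt_of_card {n : ℕ} {r : Fin n → α → ℕ} {X Y : Finset α}
    (hle : ∀ j, X.sup (r j) ≤ Y.sup (r j)) (hcard : Y.card < X.card) :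
    lexValue r X < lexValue r Y := by
  refine Prod.Lex.toLex_lt_toLex'.2 ⟨Pi.toLex_monotone hle, fun _ => ?_⟩
  simpa using hcard

/-- A map from a finite type to a linear order can be replaced by a real-valued one: count the
points of strictly smaller value. -/
theorem exists_real_of_linearOrder {β γ : Type*} [Fintype β] [LinearOrder γ] (v : β → γ) :
    ∃ u : β → ℝ, ∀ a b, v a < v b → u a < u b := by
  refine ⟨fun a => ((Finset.univ.filter fun c => v c < v a).card : ℝ), fun a b hab => ?_⟩
  refine Nat.cast_lt.2 (Finset.card_lt_card ?_)
  refine Finset.ssubset_iff_of_subset (fun c hc => ?_) |>.2 ⟨a, by simpa using hab, by simp⟩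
  simp only [Finset.mem_filter, Finset.mem_univ, true_and] at hc ⊢
  exact hc.trans hab

theorem stmt2 (C : Finset α → Finset α) (hC : IsChoiceRule C)
    (hpi : PathIndependent C) :
    ∃ u : Finset α → ℝ, Rationalizes u C ∧ OrdinalConcavePlus u := by
  obtain ⟨n, r, hinj, hcomp, htop⟩ := exists_rankings hC hpi
  obtain ⟨u, hu⟩ := exists_real_of_linearOrder (lexValue r)
  refine ⟨u, ?_, ?_⟩
  · intro X X' hX' hne
    apply hu
    have hle : ∀ j, X'.sup (r j) ≤ (C X).sup (r j) := by
      intro j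
      refine (Finset.sup_mono hX').trans ?_
      rcases X.eq_empty_or_nonempty with rfl | hX
      · simp
      obtain ⟨y, hy, hsup⟩ := Finset.exists_mem_eq_sup X hX (r j)
      rcases Nat.eq_zero_or_pos (r j y) with h0 | h0
      · omega
      · rw [hsup]
        exact Finset.le_sup (hcomp j X y hy ⟨h0, fun z hz => hsup ▸ Finset.le_sup hz⟩)
    by_cases hlt : ∃ i, X'.sup (r i) < (C X).sup (r i)
    · obtain ⟨i, hi⟩ := hlt
      exact lexValue_lt_of_lt i (fun j _ => hle j) hi
    · push Not at hlt
      have hsub : C X ⊆ X' := by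
        intro x hx
        obtain ⟨i, h0, h1⟩ := htop X x hx
        have h2 : r i x ≤ X'.sup (r i) := (Finset.le_sup hx).trans (hlt i)
        obtain ⟨y, hy, hxy⟩ := (Finset.le_sup_iff (by simpa using h0)).1 h2
        have : x = y := hinj i x y h0 (hxy.antisymm (h1 y (hX' hy)))
        exact this ▸ hy
      exact lexValue_lt_of_card hle (Finset.card_lt_card (hsub.ssubset_of_ne hne.symm))
  · intro X X' x hx
    obtain ⟨hxX, hxX'⟩ := Finset.mem_sdiff.1 hx
    by_cases hlt : ∃ i, X'.sup (r i) < r i x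
    · right
      obtain ⟨i, hi⟩ := hlt
      exact hu _ _ (lexValue_lt_of_lt i (fun j _ => Finset.sup_mono (Finset.subset_insert _ _))
        (hi.trans_le (Finset.le_sup (Finset.mem_insert_self _ _))))
    · left
      push Not at hlt
      by_cases hex : ∃ i, IsTopRanked (r i) X x
      · obtain ⟨i, hi, hmin⟩ := WellFounded.has_min (wellFounded_lt (α := Fin n))
          {i | IsTopRanked (r i) X x} hex
        obtain ⟨h0, h1⟩ := hi
        obtain ⟨y, hy, hxy⟩ := (Finset.le_sup_iff (by simpa using h0)).1 (hlt i)
        have hxy' : r i x < r i y := hxy.lt_of_ne fun e =>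
          hxX' (hinj i x y h0 e ▸ hy)
        have hyX : y ∉ X := fun h => absurd (h1 y h) (not_le.2 hxy')
        refine ⟨some y, fun a ha => ?_, hu _ _ (lexValue_lt_of_lt i (fun j hj => ?_) ?_)⟩
        · obtain rfl := Option.some.inj ha
          exact Finset.mem_sdiff.2 ⟨hy, hyX⟩
        · exact (sup_le_sup_erase fun h => hmin j h hj).trans
            (Finset.sup_mono (Finset.subset_insert _ _))
        · exact ((Finset.sup_le h1).trans_lt hxy').trans_le
            (Finset.le_sup (f := r i) (Finset.mem_insert_self y (X.erase x)))
      · push Not at hex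
        exact ⟨none, by simp, hu _ _ (lexValue_lt_of_card (fun j => sup_le_sup_erase (hex j))
          (Finset.card_erase_lt_of_mem hxX))⟩
end

section
/- If a choice rule C on a finite set 𝒳 of contracts is rationalizable by a utility function u satisfying M♮-concavity, then C satisfies path independence and the law of aggregate demand. -/
/-!
Any set `Y ⊆ X` has `u Y ≤ u (C X)`, strictly unless `Y = C X`. An M♮-exchange between the chosen
sets `A = C X'` and `B = C X` with `X ⊆ X'` produces two sets `A − x + x'` and `B + x − x'`, and the
inequality `u A + u B ≤ u (A − x + x') + u (B + x − x')` conflicts with the optimality of `A` and `B`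
as soon as both new sets are feasible and one of them differs from the chosen set.

* If `x ∈ A ∩ X` were not in `B`, this conflict would arise at once, so `C` satisfies
  substitutability; with irrelevance of rejected contracts this gives path independence.
* For the law of aggregate demand it is enough to add one contract `y` to `X`. If `y` is chosen from
  `X + y`, the exchange at `y` between `A = C (X + y)` and `B = C X` forces `A − y + y' = B`, which
  has at most as many elements as `A`.
-/

open Finset

variable {α : Type*} [DecidableEq α] [Fintype α]

lemma Rationalizes.le {C : Finset α → Finset α} {u : Finset α → ℝ} (hu : Rationalizes u C)
    {X Y : Finset α} (h : Y ⊆ X) : u Y ≤ u (C X) := by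
  by_cases hY : Y = C X
  · rw [hY]
  · exact (hu X Y h hY).le

lemma swapIn_subset {A Z : Finset α} {x : α} {x' : Option α} (hA : A.erase x ⊆ Z)
    (hx' : ∀ a, x' = some a → a ∈ Z) : swapIn A x x' ⊆ Z := by
  cases x' with
  | none => exact hA
  | some a => exact insert_subset (hx' a rfl) hA

lemma swapOut_subset {B Z : Finset α} {x : α} {x' : Option α} (hB : B ⊆ Z) (hx : x ∈ Z) :
    swapOut B x x' ⊆ Z := by
  cases x' with
  | none => exact insert_subset hx hB
  | some a => exact (erase_subset _ _).trans (insert_subset hx hB)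

lemma notMem_swapIn {A : Finset α} {x : α} {x' : Option α} (hx' : x' ≠ some x) :
    x ∉ swapIn A x x' := by
  cases x' with
  | none => simp [swapIn]
  | some a =>
    have : x ≠ a := fun h => hx' (by rw [h])
    simp [swapIn, this]

lemma card_swapIn_le {A : Finset α} {x : α} {x' : Option α} (hx : x ∈ A) :
    (swapIn A x x').card ≤ A.card := by
  cases x' with
  | none => exact card_le_card (erase_subset _ _)
  | some a =>
    have h := card_insert_le a (A.erase x)
    rwa [card_erase_add_one hx] at h

lemma Rationalizes.irrelevance {C : Finset α → Finset α} {u : Finset α → ℝ}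
    (hC : IsChoiceRule C) (hu : Rationalizes u C) : IrrelevanceOfRejectedContracts C := by
  intro X X' hX hCX'
  by_contra hne
  have h₁ := hu X' (C X) ((hC X).trans hX) hne
  have h₂ := hu X (C X') hCX' (Ne.symm hne)
  exact lt_asymm h₁ h₂

lemma MNatConcave.substitutes {C : Finset α → Finset α} {u : Finset α → ℝ}
    (hC : IsChoiceRule C) (hu : Rationalizes u C) (hm : MNatConcave u) : Substitutes C := by
  intro X X' hX x hx
  obtain ⟨hxA, hxX⟩ := mem_inter.mp hx
  by_contra hxB
  obtain ⟨x', hx', hle⟩ := hm (C X') (C X) x (mem_sdiff.mpr ⟨hxA, hxB⟩)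
  have hne : x' ≠ some x := fun h => (mem_sdiff.mp (hx' x h)).2 hxA
  have h₁ : u (swapIn (C X') x x') < u (C X') := by
    refine hu X' _ (swapIn_subset ((erase_subset _ _).trans (hC X')) fun a ha =>
      hX (hC X (mem_sdiff.mp (hx' a ha)).1)) fun h => notMem_swapIn hne (h ▸ hxA)
  have h₂ : u (swapOut (C X) x x') ≤ u (C X) := hu.le (swapOut_subset (hC X) hxX)
  linarith

/-- Path independence follows from substitutability and irrelevance of rejected contracts:
substitutability places `C (X ∪ X')` inside `C X ∪ X'`. -/
lemma pathIndependent_of_substitutes {C : Finset α → Finset α} (hC : IsChoiceRule C)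
    (hs : Substitutes C) (hi : IrrelevanceOfRejectedContracts C) : PathIndependent C := by
  intro X X'
  refine (hi _ _ (union_subset_union_left (hC X)) fun a ha => ?_).symm
  rcases mem_union.mp (hC _ ha) with h | h
  · exact mem_union_left _ (hs X _ subset_union_left (mem_inter.mpr ⟨ha, h⟩))
  · exact mem_union_right _ h

lemma MNatConcave.card_le_card_insert {C : Finset α → Finset α} {u : Finset α → ℝ}
    (hC : IsChoiceRule C) (hu : Rationalizes u C) (hm : MNatConcave u) (X : Finset α) (y : α) :
    (C X).card ≤ (C (insert y X)).card := by
  by_cases hyA : y ∈ C (insert y X)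
  swap
  · -- A rejected `y` does not affect the choice.
    rw [hu.irrelevance hC X _ (subset_insert y X)
      ((subset_insert_iff_of_notMem hyA).mp (hC _))]
  by_cases hyB : y ∈ C X
  · rw [insert_eq_of_mem (hC X hyB)]
  obtain ⟨y', hy', hle⟩ := hm (C (insert y X)) (C X) y (mem_sdiff.mpr ⟨hyA, hyB⟩)
  have hsub : swapIn (C (insert y X)) y y' ⊆ X :=
    swapIn_subset (subset_insert_iff.mp (hC _)) fun a ha => hC X (mem_sdiff.mp (hy' a ha)).1
  have hout : u (swapOut (C X) y y') ≤ u (C (insert y X)) :=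
    hu.le (swapOut_subset ((hC X).trans (subset_insert y X)) (mem_insert_self y X))
  have heq : swapIn (C (insert y X)) y y' = C X := by
    by_contra hne
    have := hu X _ hsub hne
    linarith
  rw [← heq]
  exact card_swapIn_le hyA

lemma MNatConcave.lawOfAggregateDemand {C : Finset α → Finset α} {u : Finset α → ℝ}
    (hC : IsChoiceRule C) (hu : Rationalizes u C) (hm : MNatConcave u) :
    LawOfAggregateDemand C := by
  intro X X' hX
  have key : ∀ S : Finset α, (C X').card ≤ (C (S ∪ X')).card := by
    intro S
    induction S using Finset.induction_on with
    | empty => simp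
    | insert y S _ ih =>
      rw [insert_union]
      exact ih.trans (hm.card_le_card_insert hC hu _ y)
  simpa [union_eq_left.mpr hX] using key X

theorem stmt7 (C : Finset α → Finset α) (hC : IsChoiceRule C)
    (u : Finset α → ℝ) (hu : Rationalizes u C) (hm : MNatConcave u) :
    PathIndependent C ∧ LawOfAggregateDemand C :=
  ⟨pathIndependent_of_substitutes hC (hm.substitutes hC hu) (hu.irrelevance hC),
    hm.lawOfAggregateDemand hC hu⟩
end

section
/- If a choice rule C on a finite set 𝒳 of contracts is rationalizable by some utility function, then C satisfies the irrelevance of rejected contracts. -/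
open Finset

variable {α : Type*} [DecidableEq α] [Fintype α]

theorem stmt14 (C : Finset α → Finset α) (hC : IsChoiceRule C)
    (u : Finset α → ℝ) (hu : Rationalizes u C) :
    IrrelevanceOfRejectedContracts C := by
  intro X X' hXX' hCX
  by_contra hne
  -- Each of `C X` and `C X'` is available when the other is chosen, so each is strictly better.
  have h₁ : u (C X) < u (C X') := hu X' (C X) ((hC X).trans hXX') hne
  have h₂ : u (C X') < u (C X) := hu X (C X') hCX (Ne.symm hne)
  exact lt_asymm h₁ h₂
end
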